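/- If G is a finite simple graph with independence number at most 3 and |V(G)| ≤ 2χ(G), then χ(G) = ch^OL(G), i.e., the on-line choice number of G equals its chromatic number. -/

import Mathlib

variable {V : Type} [Fintype V] [DecidableEq V]

/-- Approximations to on-line `f`-choosability of the subgraph of `G` induced on `S`:
`OnlineChoosableAux G n S f` says that the defining recursion certifies choosability
within `n` unfoldings. -/
def OnlineChoosableAux (G : SimpleGraph V) : ℕ → Finset V → (V → ℕ) → Prop
  | 0, _S, _f => False
  | n + 1, S, f =>
      ((∀ u ∈ S, ∀ v ∈ S, ¬ G.Adj u v) ∧ ∀ v ∈ S, 1 ≤ f v) ∨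
      ((∃ u ∈ S, ∃ v ∈ S, G.Adj u v) ∧
        ∀ U : Finset V, U ⊆ S → U.Nonempty →
          ∃ I : Finset V, I ⊆ U ∧ (∀ u ∈ I, ∀ v ∈ I, ¬ G.Adj u v) ∧
            OnlineChoosableAux G n (S \ I) (fun v => f v - if v ∈ U then 1 else 0))

/-- The subgraph of `G` induced on `S` is on-line `f`-choosable: the least fixed point of
the recursion “if edgeless then `f ≥ 1` everywhere, else for every nonempty `U ⊆ S`
there is an independent `I ⊆ U` with `G - I` on-line `(f - δ_U)`-choosable”. -/
def OnlineChoosable (G : SimpleGraph V) (S : Finset V) (f : V → ℕ) : Prop :=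
  ∃ n, OnlineChoosableAux G n S f

/-- The on-line choice number: least `k` such that `G` is on-line `k`-choosable. -/
noncomputable def onlineChoiceNumber (G : SimpleGraph V) : ℕ :=
  sInf {k | OnlineChoosable G Finset.univ (fun _ => k)}

/-- The chromatic number of `G` as a natural number. -/
noncomputable def chromNum (G : SimpleGraph V) : ℕ := sInf {n | G.Colorable n}

/-! ### Ordered lists of singleton parts -/

/-- The `i`-th element (counting from one) of the list has `f`-value at least `c + i`. -/
def OrdGE (f : V → ℕ) : ℕ → List V → Prop
  | _, [] => True
  | c, a :: l => c + 1 ≤ f a ∧ OrdGE f (c + 1) l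

/-- The function after the set `U` has been presented. -/
def dec (f : V → ℕ) (U : Finset V) : V → ℕ := fun v => f v - if v ∈ U then 1 else 0

omit [Fintype V] in
theorem dec_mem {f : V → ℕ} {U : Finset V} {v : V} (h : v ∈ U) : dec f U v = f v - 1 := by
  simp [dec, h]

omit [Fintype V] in
theorem dec_not_mem {f : V → ℕ} {U : Finset V} {v : V} (h : v ∉ U) : dec f U v = f v := by
  simp [dec, h]

omit [Fintype V] in
theorem dec_ge (f : V → ℕ) (U : Finset V) (v : V) : f v ≤ dec f U v + 1 := by
  unfold dec; split_ifs <;> omega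

omit [Fintype V] [DecidableEq V] in
theorem ordGE_append (f : V → ℕ) (c : ℕ) (l m : List V) :
    OrdGE f c (l ++ m) ↔ OrdGE f c l ∧ OrdGE f (c + l.length) m := by
  induction l generalizing c with
  | nil => simp [OrdGE]
  | cons a l ih =>
    simp only [List.cons_append, OrdGE, ih, List.length_cons, and_assoc]
    rw [show c + 1 + l.length = c + (l.length + 1) by omega]

omit [Fintype V] in
theorem ordGE_step {f : V → ℕ} {U : Finset V} {c c' : ℕ} {l : List V} (h : OrdGE f c l)
    (hc : c' + 1 ≤ c) : OrdGE (dec f U) c' l := by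
  induction l generalizing c c' with
  | nil => trivial
  | cons a l ih =>
    have := dec_ge f U a
    exact ⟨by have := h.1; omega, ih h.2 (by omega)⟩

omit [Fintype V] in
theorem ordGE_keep {f : V → ℕ} {U : Finset V} {c c' : ℕ} {l : List V} (h : OrdGE f c l)
    (hU : ∀ x ∈ l, x ∉ U) (hc : c' ≤ c) : OrdGE (dec f U) c' l := by
  induction l generalizing c c' with
  | nil => trivial
  | cons a l ih =>
    have := dec_not_mem (f := f) (hU a (by simp))
    exact ⟨by have := h.1; omega, ih h.2 (fun x hx => hU x (by simp [hx])) (by omega)⟩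

omit [Fintype V] [DecidableEq V] in
theorem ordGE_pos {f : V → ℕ} {c : ℕ} {l : List V} (h : OrdGE f c l) : ∀ x ∈ l, 1 ≤ f x := by
  induction l generalizing c with
  | nil => simp
  | cons a l ih =>
    intro x hx
    rcases List.mem_cons.1 hx with rfl | hx
    · have := h.1; omega
    · exact ih h.2 x hx

omit [Fintype V] [DecidableEq V] in
theorem ordGE_const {k c : ℕ} {l : List V} (h : c + l.length ≤ k) :
    OrdGE (fun _ => k) c l := by
  induction l generalizing c with
  | nil => trivial
  | cons a l ih =>
    simp only [List.length_cons] at h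
    exact ⟨show c + 1 ≤ k by omega, ih (by omega)⟩

omit [Fintype V] in
theorem exists_first {U : Finset V} {l : List V} (h : ∃ x ∈ l, x ∈ U) :
    ∃ l₁ a l₂, l = l₁ ++ a :: l₂ ∧ a ∈ U ∧ ∀ x ∈ l₁, x ∉ U := by
  induction l with
  | nil => simp at h
  | cons b l ih =>
    by_cases hb : b ∈ U
    · exact ⟨[], b, l, rfl, hb, by simp⟩
    · obtain ⟨x, hx, hxU⟩ := h
      have hx' : x ∈ l := by
        rcases List.mem_cons.1 hx with rfl | hx
        · exact absurd hxU hb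
        · exact hx
      obtain ⟨l₁, a, l₂, rfl, ha, h1⟩ := ih ⟨x, hx', hxU⟩
      refine ⟨b :: l₁, a, l₂, rfl, ha, ?_⟩
      intro y hy
      rcases List.mem_cons.1 hy with rfl | hy
      · exact hb
      · exact h1 y hy

/-! ### The invariant -/

/-- The winning condition for the painter, with `M` the remaining vertices, `A` and `L` the
ordered singleton parts, `B` the parts of size two and `C` the parts of size three. -/
structure PInv (G : SimpleGraph V) (M : Multiset V) (f : V → ℕ) (A L : List V)
    (B C : Multiset (Multiset V)) : Prop where
  cover : M = (A : Multiset V) + (L : Multiset V) + B.join + C.join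
  cardB : ∀ p ∈ B, p.card = 2
  cardC : ∀ p ∈ C, p.card = 3
  hA : OrdGE f (B.card + C.card) A
  hL : OrdGE f (2 * C.card + B.card + A.length) L
  indB : ∀ a b, {a, b} ∈ B → ¬ G.Adj a b
  indC : ∀ a b c, {a, b, c} ∈ C → ¬ G.Adj a b
  hB : ∀ a b, {a, b} ∈ B → B.card + C.card ≤ f a ∧
    3 * C.card + 2 * B.card + A.length + L.length ≤ f a + f b
  hC : ∀ a b c, {a, b, c} ∈ C → B.card + C.card ≤ f a ∧
    3 * C.card + 2 * B.card + A.length + L.length ≤ f a + f b ∧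
    4 * C.card + 3 * B.card + 2 * A.length + L.length ≤ f a + f b + f c

omit [Fintype V] [DecidableEq V] in
theorem perm_acb (a b c : V) : ({a, c, b} : Multiset V) = {a, b, c} := by
  show a ::ₘ c ::ₘ b ::ₘ 0 = a ::ₘ b ::ₘ c ::ₘ 0
  rw [Multiset.cons_swap c b]

omit [Fintype V] [DecidableEq V] in
theorem perm_bac (a b c : V) : ({b, a, c} : Multiset V) = {a, b, c} := by
  show b ::ₘ a ::ₘ c ::ₘ 0 = a ::ₘ b ::ₘ c ::ₘ 0
  rw [Multiset.cons_swap b a]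

omit [Fintype V] [DecidableEq V] in
theorem perm_bca (a b c : V) : ({b, c, a} : Multiset V) = {a, b, c} := by
  rw [perm_acb b a c, perm_bac]

omit [Fintype V] [DecidableEq V] in
theorem perm_ba (a b : V) : ({b, a} : Multiset V) = {a, b} := Multiset.pair_comm b a

omit [Fintype V] [DecidableEq V] in
theorem exists_pair {p : Multiset V} {a : V} (h : p.card = 2) (ha : a ∈ p) :
    ∃ b, p = {a, b} := by
  obtain ⟨q, rfl⟩ := Multiset.exists_cons_of_mem ha
  rw [Multiset.card_cons] at h
  obtain ⟨b, rfl⟩ := Multiset.card_eq_one.1 (show q.card = 1 by omega)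
  exact ⟨b, rfl⟩

omit [Fintype V] [DecidableEq V] in
theorem exists_triple {p : Multiset V} {a : V} (h : p.card = 3) (ha : a ∈ p) :
    ∃ b c, p = {a, b, c} := by
  obtain ⟨q, rfl⟩ := Multiset.exists_cons_of_mem ha
  rw [Multiset.card_cons] at h
  obtain ⟨b, c, rfl⟩ := Multiset.card_eq_two.1 (show q.card = 2 by omega)
  exact ⟨b, c, rfl⟩

omit [Fintype V] [DecidableEq V] in
theorem PInv.pos {G : SimpleGraph V} {M : Multiset V} {f : V → ℕ} {A L : List V}
    {B C : Multiset (Multiset V)} (h : PInv G M f A L B C) : ∀ v ∈ M, 1 ≤ f v := by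
  intro v hv
  rw [h.cover] at hv
  simp only [Multiset.mem_add, Multiset.mem_coe, Multiset.mem_join] at hv
  rcases hv with ((hv | hv) | ⟨p, hp, hv⟩) | ⟨p, hp, hv⟩
  · exact ordGE_pos h.hA v hv
  · exact ordGE_pos h.hL v hv
  · obtain ⟨b, rfl⟩ := exists_pair (h.cardB p hp) hv
    have := (h.hB v b hp).1
    have := Multiset.card_pos_iff_exists_mem.2 ⟨_, hp⟩
    omega
  · obtain ⟨b, c, rfl⟩ := exists_triple (h.cardC p hp) hv
    have := (h.hC v b c hp).1
    have := Multiset.card_pos_iff_exists_mem.2 ⟨_, hp⟩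
    omega

omit [Fintype V] in
/-- How the conditions on parts of size two survive a move. -/
theorem transB {f : V → ℕ} {U : Finset V} {B B' : Multiset (Multiset V)} {k N k' N' : ℕ}
    (hsub : B' ≤ B) (h : ∀ a b, {a, b} ∈ B → k ≤ f a ∧ N ≤ f a + f b)
    (h1 : ∀ a b, {a, b} ∈ B → a ∈ U → k' + 1 ≤ f a)
    (h2 : N' + 2 ≤ N ∨ N' + 1 ≤ N ∧ ∀ a b, {a, b} ∈ B → a ∈ U → b ∉ U)
    (hk : k' ≤ k) :
    ∀ a b, {a, b} ∈ B' → k' ≤ dec f U a ∧ N' ≤ dec f U a + dec f U b := by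
  intro a b hab
  have hab := Multiset.mem_of_le hsub hab
  have e := h a b hab
  have e1 := h1 a b hab
  have da := dec_ge f U a
  have db := dec_ge f U b
  constructor
  · by_cases ha : a ∈ U
    · have := e1 ha; omega
    · rw [dec_not_mem ha]; omega
  · rcases h2 with h2 | ⟨h2, h3⟩
    · omega
    · have h3 := h3 a b hab
      by_cases ha : a ∈ U
      · rw [dec_not_mem (h3 ha)]; omega
      · rw [dec_not_mem ha]; omega

omit [Fintype V] in
/-- How the conditions on parts of size three survive a move. -/
theorem transC {f : V → ℕ} {U : Finset V} {C C' : Multiset (Multiset V)} {k N T k' N' T' : ℕ}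
    (hsub : C' ≤ C)
    (h : ∀ a b c, {a, b, c} ∈ C → k ≤ f a ∧ N ≤ f a + f b ∧ T ≤ f a + f b + f c)
    (h1 : ∀ a b c, {a, b, c} ∈ C → a ∈ U → k' + 1 ≤ f a)
    (h2 : ∀ a b c, {a, b, c} ∈ C → a ∈ U → b ∈ U → N' + 2 ≤ f a + f b)
    (h3 : T' + 3 ≤ T ∨ (T' + 2 ≤ T ∧ ∀ a b c, {a, b, c} ∈ C → a ∈ U → b ∈ U → c ∉ U) ∨
      (T' + 1 ≤ T ∧ ∀ a b c, {a, b, c} ∈ C → a ∈ U → b ∉ U))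
    (hk : k' ≤ k) (hN : N' + 1 ≤ N) :
    ∀ a b c, {a, b, c} ∈ C' → k' ≤ dec f U a ∧ N' ≤ dec f U a + dec f U b ∧
      T' ≤ dec f U a + dec f U b + dec f U c := by
  intro a b c hab
  have hab := Multiset.mem_of_le hsub hab
  have e := h a b c hab
  have e1 := h1 a b c hab
  have e2 := h2 a b c hab
  have da := dec_ge f U a
  have db := dec_ge f U b
  have dc := dec_ge f U c
  have na := @dec_not_mem _ _ f U a
  have nb := @dec_not_mem _ _ f U b
  have nc := @dec_not_mem _ _ f U c
  refine ⟨?_, ?_, ?_⟩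
  · by_cases ha : a ∈ U
    · have := e1 ha; omega
    · have := na ha; omega
  · by_cases ha : a ∈ U
    · by_cases hb : b ∈ U
      · have := e2 ha hb; omega
      · have := nb hb; omega
    · have := na ha; omega
  · rcases h3 with h3 | ⟨h3, h4⟩ | ⟨h3, h4⟩
    · omega
    · by_cases ha : a ∈ U
      · by_cases hb : b ∈ U
        · have := nc (h4 a b c hab ha hb); omega
        · have := nb hb; omega
      · have := na ha; omega
    · have p1 := h4 a b c hab
      have p2 := h4 a c b (by rwa [perm_acb])
      have p3 := h4 b c a (by rwa [perm_bca])
      by_cases ha : a ∈ U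
      · have := nb (p1 ha); have := nc (p2 ha); omega
      · have := na ha
        by_cases hb : b ∈ U
        · have := nc (p3 hb); omega
        · have := nb hb; omega

/-- The painter can answer `U` by colouring `m`. -/
def Reply (G : SimpleGraph V) (M : Multiset V) (f : V → ℕ) (U : Finset V) : Prop :=
  ∃ m M' : Multiset V, M = m + M' ∧ (∀ x ∈ m, x ∈ U) ∧ (∀ x ∈ m, ∀ y ∈ m, ¬ G.Adj x y) ∧
    ∃ A L B C, PInv G M' (dec f U) A L B C

omit [Fintype V] in
theorem reply_of_inv {G : SimpleGraph V} {M : Multiset V} {f : V → ℕ} {A L : List V}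
    {B C : Multiset (Multiset V)} (h : PInv G M f A L B C) (U : Finset V)
    (hU : ∃ x ∈ M, x ∈ U) : Reply G M f U := by
  obtain ⟨hcov, cB, cC, hA, hL, iB, iC, hB, hC⟩ := h
  -- full triples
  by_cases c1 : ∃ a b c, {a, b, c} ∈ C ∧ a ∈ U ∧ b ∈ U ∧ c ∈ U
  · obtain ⟨a, b, c, hp, ha, hb, hc⟩ := c1
    have i1 := iC a b c hp
    have i2 := iC a c b (by rwa [perm_acb])
    have i3 := iC b c a (by rwa [perm_bca])
    obtain ⟨C', rfl⟩ := Multiset.exists_cons_of_mem hp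
    simp only [Multiset.card_cons] at *
    refine ⟨{a, b, c}, (A : Multiset V) + L + B.join + C'.join, ?_, ?_, ?_, A, L, B, C', rfl, cB,
      fun p hp => cC p (by simp [hp]), ordGE_step hA (by omega), ordGE_step hL (by omega), iB,
      fun a b c h => iC a b c (Multiset.mem_cons_of_mem h), ?_, ?_⟩
    · rw [hcov, Multiset.join_cons]; abel
    · simp [ha, hb, hc]
    · simp [i1, i2, i3, G.adj_comm b a, G.adj_comm c a, G.adj_comm c b]
    · exact transB le_rfl hB (fun a b h _ => by have := hB a b h; omega) (by omega) (by omega)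
    · exact transC (Multiset.le_cons_self _ _) hC (fun a b c h _ => by have := hC a b c h; omega)
        (fun a b c h _ _ => by have := hC a b c h; omega) (by omega) (by omega) (by omega)
  -- full pairs
  by_cases c2 : ∃ a b, {a, b} ∈ B ∧ a ∈ U ∧ b ∈ U
  · obtain ⟨a, b, hp, ha, hb⟩ := c2
    have i1 := iB a b hp
    obtain ⟨B', rfl⟩ := Multiset.exists_cons_of_mem hp
    simp only [Multiset.card_cons] at *
    refine ⟨{a, b}, (A : Multiset V) + L + B'.join + C.join, ?_, ?_, ?_, A, L, B', C, rfl,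
      fun p hp => cB p (by simp [hp]), cC, ordGE_step hA (by omega), ordGE_step hL (by omega),
      fun a b h => iB a b (Multiset.mem_cons_of_mem h), iC, ?_, ?_⟩
    · rw [hcov, Multiset.join_cons]; abel
    · simp [ha, hb]
    · simp [i1, G.adj_comm b a]
    · exact transB (Multiset.le_cons_self _ _) hB (fun a b h _ => by have := hB a b h; omega)
        (by omega) (by omega)
    · exact transC le_rfl hC (fun a b c h _ => by have := hC a b c h; omega)
        (fun a b c h _ _ => by have := hC a b c h; omega) (by omega) (by omega) (by omega)
  have nfC : ∀ a b c, {a, b, c} ∈ C → a ∈ U → b ∈ U → c ∉ U :=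
    fun a b c h ha hb hc => c1 ⟨a, b, c, h, ha, hb, hc⟩
  have nfB : ∀ a b, {a, b} ∈ B → a ∈ U → b ∉ U := fun a b h ha hb => c2 ⟨a, b, h, ha, hb⟩
  clear c1 c2
  -- two presented vertices of a triple with tight sum
  by_cases c3 : ∃ a b c, {a, b, c} ∈ C ∧ a ∈ U ∧ b ∈ U ∧
      f a + f b ≤ 3 * C.card + 2 * B.card + A.length + L.length
  · obtain ⟨a, b, c, hp, ha, hb, ht⟩ := c3
    have i1 := iC a b c hp
    have hc := nfC a b c hp ha hb
    have s1 := hC a b c hp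
    have dc := dec_not_mem (f := f) hc
    obtain ⟨C', rfl⟩ := Multiset.exists_cons_of_mem hp
    simp only [Multiset.card_cons] at *
    refine ⟨{a, b}, ((A ++ [c] : List V) : Multiset V) + L + B.join + C'.join, ?_, ?_, ?_,
      A ++ [c], L, B, C', rfl, cB, fun p hp => cC p (by simp [hp]), ?_,
      ordGE_step hL (by simp only [List.length_append, List.length_cons, List.length_nil]; omega), iB, fun a b c h => iC a b c (Multiset.mem_cons_of_mem h), ?_, ?_⟩
    · rw [hcov, Multiset.join_cons, ← Multiset.coe_add]
      show _ = ({a} + {b} : Multiset V) + ((A : Multiset V) + {c} + _ + _ + _)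
      have : ({a, b, c} : Multiset V) = {a} + {b} + {c} := rfl
      rw [this]; abel
    · simp [ha, hb]
    · simp [i1, G.adj_comm b a]
    · rw [ordGE_append]
      refine ⟨ordGE_step hA (by omega), ?_, trivial⟩
      rw [dc]; omega
    · simp only [List.length_append, List.length_cons, List.length_nil]
      exact transB le_rfl hB (fun a b h _ => by have := hB a b h; omega) (by omega) (by omega)
    · simp only [List.length_append, List.length_cons, List.length_nil]
      exact transC (Multiset.le_cons_self _ _) hC (fun a b c h _ => by have := hC a b c h; omega)
        (fun a b c h _ _ => by have := hC a b c h; omega) (Or.inr (Or.inl ⟨by omega, nfC⟩))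
        (by omega) (by omega)
  have ntP : ∀ a b c, {a, b, c} ∈ C → a ∈ U → b ∈ U →
      3 * C.card + 2 * B.card + A.length + L.length + 1 ≤ f a + f b := by
    intro a b c h ha hb
    by_contra hn
    exact c3 ⟨a, b, c, h, ha, hb, by omega⟩
  clear c3
  -- two presented vertices of a triple, one of them tight
  by_cases c4 : ∃ a b c, {a, b, c} ∈ C ∧ a ∈ U ∧ b ∈ U ∧ f a ≤ B.card + C.card
  · obtain ⟨a, b, c, hp, ha, hb, ht⟩ := c4
    have i1 := iC a b c hp
    have hc := nfC a b c hp ha hb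
    have s1 := hC a c b (by rwa [perm_acb])
    have dc := dec_not_mem (f := f) hc
    obtain ⟨C', rfl⟩ := Multiset.exists_cons_of_mem hp
    simp only [Multiset.card_cons] at *
    refine ⟨{a, b}, (A : Multiset V) + ((L ++ [c] : List V) : Multiset V) + B.join + C'.join,
      ?_, ?_, ?_,
      A, L ++ [c], B, C', rfl, cB, fun p hp => cC p (by simp [hp]), ordGE_step hA (by omega),
      ?_, iB, fun a b c h => iC a b c (Multiset.mem_cons_of_mem h), ?_, ?_⟩
    · rw [hcov, Multiset.join_cons, ← Multiset.coe_add]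
      show _ = ({a} + {b} : Multiset V) + ((A : Multiset V) + (_ + {c}) + _ + _)
      have : ({a, b, c} : Multiset V) = {a} + {b} + {c} := rfl
      rw [this]; abel
    · simp [ha, hb]
    · simp [i1, G.adj_comm b a]
    · rw [ordGE_append]
      refine ⟨ordGE_step hL (by omega), ?_, trivial⟩
      rw [dc]; omega
    · simp only [List.length_append, List.length_cons, List.length_nil]
      exact transB le_rfl hB (fun a b h _ => by have := hB a b h; omega) (by omega) (by omega)
    · simp only [List.length_append, List.length_cons, List.length_nil]
      exact transC (Multiset.le_cons_self _ _) hC (fun a b c h _ => by have := hC a b c h; omega)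
        (fun a b c h _ _ => by have := hC a b c h; omega) (Or.inr (Or.inl ⟨by omega, nfC⟩))
        (by omega) (by omega)
  -- a tight presented vertex of a triple, alone
  by_cases c5 : ∃ a b c, {a, b, c} ∈ C ∧ a ∈ U ∧ f a ≤ B.card + C.card
  · obtain ⟨a, b, c, hp, ha, ht⟩ := c5
    have hb : b ∉ U := fun hb => c4 ⟨a, b, c, hp, ha, hb, ht⟩
    have hc : c ∉ U := fun hc => c4 ⟨a, c, b, by rwa [perm_acb], ha, hc, ht⟩
    have s1 := hC a c b (by rwa [perm_acb])
    have s2 := hC a b c hp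
    have db := dec_not_mem (f := f) hb
    have dc := dec_not_mem (f := f) hc
    clear c4
    obtain ⟨C', rfl⟩ := Multiset.exists_cons_of_mem hp
    simp only [Multiset.card_cons] at *
    refine ⟨{a}, (A : Multiset V) + ((L ++ [b, c] : List V) : Multiset V) + B.join + C'.join,
      ?_, ?_, ?_,
      A, L ++ [b, c], B, C', rfl, cB, fun p hp => cC p (by simp [hp]), ordGE_step hA (by omega),
      ?_, iB, fun a b c h => iC a b c (Multiset.mem_cons_of_mem h), ?_, ?_⟩
    · rw [hcov, Multiset.join_cons, ← Multiset.coe_add]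
      show _ = ({a} : Multiset V) + ((A : Multiset V) + (_ + ({b} + {c})) + _ + _)
      have : ({a, b, c} : Multiset V) = {a} + {b} + {c} := rfl
      rw [this]; abel
    · simp [ha]
    · simp
    · rw [ordGE_append]
      refine ⟨ordGE_step hL (by omega), ?_, ?_, trivial⟩
      · rw [db]; omega
      · rw [dc]; omega
    · simp only [List.length_append, List.length_cons, List.length_nil]
      exact transB le_rfl hB (fun a b h _ => by have := hB a b h; omega)
        (Or.inr ⟨by omega, nfB⟩) (by omega)
    · simp only [List.length_append, List.length_cons, List.length_nil]
      exact transC (Multiset.le_cons_self _ _) hC (fun a b c h _ => by have := hC a b c h; omega)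
        (fun a b c h ha hb => by have := ntP a b c h ha hb; omega)
        (Or.inr (Or.inl ⟨by omega, nfC⟩)) (by omega) (by omega)
  have ntC : ∀ a b c, {a, b, c} ∈ C → a ∈ U → B.card + C.card + 1 ≤ f a := by
    intro a b c h ha
    by_contra hn
    exact c5 ⟨a, b, c, h, ha, by omega⟩
  clear c4 c5
  -- a tight presented vertex of a pair
  by_cases c6 : ∃ a b, {a, b} ∈ B ∧ a ∈ U ∧ f a ≤ B.card + C.card
  · obtain ⟨a, b, hp, ha, ht⟩ := c6
    have hb := nfB a b hp ha
    have s1 := hB a b hp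
    have db := dec_not_mem (f := f) hb
    obtain ⟨B', rfl⟩ := Multiset.exists_cons_of_mem hp
    simp only [Multiset.card_cons] at *
    refine ⟨{a}, (A : Multiset V) + ((L ++ [b] : List V) : Multiset V) + B'.join + C.join,
      ?_, ?_, ?_,
      A, L ++ [b], B', C, rfl, fun p hp => cB p (by simp [hp]), cC, ordGE_step hA (by omega),
      ?_, fun a b h => iB a b (Multiset.mem_cons_of_mem h), iC, ?_, ?_⟩
    · rw [hcov, Multiset.join_cons, ← Multiset.coe_add]
      show _ = ({a} : Multiset V) + ((A : Multiset V) + (_ + {b}) + _ + _)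
      have : ({a, b} : Multiset V) = {a} + {b} := rfl
      rw [this]; abel
    · simp [ha]
    · simp
    · rw [ordGE_append]
      refine ⟨ordGE_step hL (by omega), ?_, trivial⟩
      rw [db]; omega
    · simp only [List.length_append, List.length_cons, List.length_nil]
      exact transB (Multiset.le_cons_self _ _) hB (fun a b h _ => by have := hB a b h; omega)
        (Or.inr ⟨by omega, nfB⟩) (by omega)
    · simp only [List.length_append, List.length_cons, List.length_nil]
      exact transC le_rfl hC (fun a b c h _ => by have := hC a b c h; omega)
        (fun a b c h ha hb => by have := ntP a b c h ha hb; omega)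
        (Or.inr (Or.inl ⟨by omega, nfC⟩)) (by omega) (by omega)
  have ntB : ∀ a b, {a, b} ∈ B → a ∈ U → B.card + C.card + 1 ≤ f a := by
    intro a b h ha
    by_contra hn
    exact c6 ⟨a, b, h, ha, by omega⟩
  clear c6
  -- a presented vertex of `A`
  by_cases c7 : ∃ x ∈ A, x ∈ U
  · obtain ⟨A₁, a, A₂, rfl, ha, hA₁⟩ := exists_first c7
    rw [ordGE_append] at hA
    obtain ⟨q1, q2, q3⟩ := hA
    simp only [List.length_append, List.length_cons] at *
    refine ⟨{a}, ((A₁ ++ A₂ : List V) : Multiset V) + L + B.join + C.join, ?_, ?_, ?_,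
      A₁ ++ A₂, L, B, C, rfl, cB, cC, ?_, ordGE_step hL (by simp only [List.length_append, List.length_cons, List.length_nil]; omega), iB, iC, ?_, ?_⟩
    · rw [hcov, ← Multiset.coe_add, ← Multiset.coe_add, ← Multiset.cons_coe,
        ← Multiset.singleton_add]
      abel
    · simp [ha]
    · simp
    · rw [ordGE_append]
      exact ⟨ordGE_keep q1 hA₁ le_rfl, ordGE_step q3 (by omega)⟩
    · simp only [List.length_append]
      exact transB le_rfl hB ntB (Or.inr ⟨by omega, nfB⟩) (by omega)
    · simp only [List.length_append]
      exact transC le_rfl hC ntC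
        (fun a b c h ha hb => by have := ntP a b c h ha hb; omega)
        (Or.inr (Or.inl ⟨by omega, nfC⟩)) (by omega) (by omega)
  have nA : ∀ x ∈ A, x ∉ U := fun x hx hxU => c7 ⟨x, hx, hxU⟩
  clear c7
  -- two presented vertices of a triple
  by_cases c8 : ∃ a b c, {a, b, c} ∈ C ∧ a ∈ U ∧ b ∈ U
  · obtain ⟨a, b, c, hp, ha, hb⟩ := c8
    have i1 := iC a b c hp
    have hc := nfC a b c hp ha hb
    have s1 := hC c a b (by rwa [← perm_bca])
    have dc := dec_not_mem (f := f) hc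
    obtain ⟨C', rfl⟩ := Multiset.exists_cons_of_mem hp
    simp only [Multiset.card_cons] at *
    refine ⟨{a, b}, ((c :: A : List V) : Multiset V) + L + B.join + C'.join, ?_, ?_, ?_,
      c :: A, L, B, C', rfl, cB, fun p hp => cC p (by simp [hp]), ⟨?_, ?_⟩,
      ordGE_step hL (by simp only [List.length_append, List.length_cons, List.length_nil]; omega), iB, fun a b c h => iC a b c (Multiset.mem_cons_of_mem h), ?_, ?_⟩
    · rw [hcov, Multiset.join_cons, ← Multiset.cons_coe, ← Multiset.singleton_add]
      show _ = ({a} + {b} : Multiset V) + _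
      have : ({a, b, c} : Multiset V) = {a} + {b} + {c} := rfl
      rw [this]; abel
    · simp [ha, hb]
    · simp [i1, G.adj_comm b a]
    · rw [dc]; omega
    · exact ordGE_keep hA nA (by omega)
    · simp only [List.length_cons]
      exact transB le_rfl hB (fun a b h _ => by have := hB a b h; omega) (by omega) (by omega)
    · simp only [List.length_cons]
      exact transC (Multiset.le_cons_self _ _) hC (fun a b c h _ => by have := hC a b c h; omega)
        (fun a b c h _ _ => by have := hC a b c h; omega) (Or.inr (Or.inl ⟨by omega, nfC⟩))
        (by omega) (by omega)
  have nd : ∀ a b c, {a, b, c} ∈ C → a ∈ U → b ∉ U :=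
    fun a b c h ha hb => c8 ⟨a, b, c, h, ha, hb⟩
  clear c8
  -- a presented vertex of `L`
  by_cases c9 : ∃ x ∈ L, x ∈ U
  · obtain ⟨L₁, a, L₂, rfl, ha, hL₁⟩ := exists_first c9
    rw [ordGE_append] at hL
    obtain ⟨q1, q2, q3⟩ := hL
    simp only [List.length_append, List.length_cons] at *
    refine ⟨{a}, (A : Multiset V) + ((L₁ ++ L₂ : List V) : Multiset V) + B.join + C.join,
      ?_, ?_, ?_,
      A, L₁ ++ L₂, B, C, rfl, cB, cC, ordGE_keep hA nA le_rfl, ?_, iB, iC, ?_, ?_⟩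
    · rw [hcov, ← Multiset.coe_add, ← Multiset.coe_add, ← Multiset.cons_coe,
        ← Multiset.singleton_add]
      abel
    · simp [ha]
    · simp
    · rw [ordGE_append]
      exact ⟨ordGE_keep q1 hL₁ le_rfl, ordGE_step q3 (by omega)⟩
    · simp only [List.length_append]
      exact transB le_rfl hB ntB (Or.inr ⟨by omega, nfB⟩) (by omega)
    · simp only [List.length_append]
      exact transC le_rfl hC ntC
        (fun a b c h ha hb => absurd hb (nd a b c h ha))
        (Or.inr (Or.inr ⟨by omega, nd⟩)) (by omega) (by omega)
  have nL : ∀ x ∈ L, x ∉ U := fun x hx hxU => c9 ⟨x, hx, hxU⟩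
  clear c9
  -- a presented vertex of a triple
  by_cases c10 : ∃ a b c, {a, b, c} ∈ C ∧ a ∈ U
  · obtain ⟨a, b, c, hp, ha⟩ := c10
    have hb : b ∉ U := nd a b c hp ha
    have hc : c ∉ U := nd a c b (by rwa [perm_acb]) ha
    have i1 := iC b c a (by rwa [perm_bca])
    have s1 := hC b c a (by rwa [perm_bca])
    have s2 := hC c b a (by rwa [perm_acb, perm_bac, perm_acb])
    have db := dec_not_mem (f := f) hb
    have dc := dec_not_mem (f := f) hc
    obtain ⟨C', rfl⟩ := Multiset.exists_cons_of_mem hp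
    simp only [Multiset.card_cons] at *
    have key : ∀ {x y : V}, ({x, y} : Multiset V) ∈ ({b, c} : Multiset V) ::ₘ B →
        ({x, y} : Multiset V) ∈ B ∨ (x = b ∧ y = c) ∨ (x = c ∧ y = b) := by
      intro x y h
      rcases Multiset.mem_cons.1 h with h | h
      · right
        have hx : x = b ∨ x = c := by
          have : x ∈ ({x, y} : Multiset V) := by simp
          rw [h] at this; simpa using this
        rcases hx with rfl | rfl
        · left
          exact ⟨rfl, by simpa using (Multiset.cons_inj_right x).1 h⟩
        · right
          rw [perm_ba x b] at h
          exact ⟨rfl, by simpa using (Multiset.cons_inj_right x).1 h⟩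
      · exact Or.inl h
    refine ⟨{a}, (A : Multiset V) + L + (({b, c} : Multiset V) ::ₘ B).join + C'.join, ?_, ?_, ?_,
      A, L, {b, c} ::ₘ B, C', rfl, ?_, fun p hp => cC p (by simp [hp]), ?_, ?_,
      ?_, fun a b c h => iC a b c (Multiset.mem_cons_of_mem h), ?_, ?_⟩
    · rw [hcov, Multiset.join_cons, Multiset.join_cons]
      have : ({a, b, c} : Multiset V) = {a} + {b, c} := rfl
      rw [this]; abel
    · simp [ha]
    · simp
    · intro p hp
      rcases Multiset.mem_cons.1 hp with rfl | hp
      · rfl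
      · exact cB p hp
    · simp only [Multiset.card_cons]
      exact ordGE_keep hA nA (by omega)
    · simp only [Multiset.card_cons]
      exact ordGE_step hL (by omega)
    · intro x y h
      rcases key h with h | ⟨rfl, rfl⟩ | ⟨rfl, rfl⟩
      · exact iB x y h
      · exact i1
      · rwa [G.adj_comm]
    · simp only [Multiset.card_cons]
      intro x y h
      rcases key h with h | ⟨rfl, rfl⟩ | ⟨rfl, rfl⟩
      · refine transB le_rfl hB ?_ (Or.inr ⟨?_, nfB⟩) ?_ x y h
        · intro a b h ha
          have := ntB a b h ha
          omega
        · omega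
        · omega
      · rw [db, dc]; omega
      · rw [db, dc]; omega
    · simp only [Multiset.card_cons]
      refine transC (Multiset.le_cons_self _ _) hC ?_
        (fun a b c h ha hb => absurd hb (nd a b c h ha))
        (Or.inr (Or.inr ⟨by omega, nd⟩)) (by omega) (by omega)
      intro a b c h ha
      have := ntC a b c h ha
      omega
  -- a presented vertex of a pair
  obtain ⟨a, haM, ha⟩ := hU
  rw [hcov] at haM
  simp only [Multiset.mem_add, Multiset.mem_coe, Multiset.mem_join] at haM
  rcases haM with ((hv | hv) | ⟨p, hp, hv⟩) | ⟨p, hp, hv⟩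
  · exact absurd ha (nA a hv)
  · exact absurd ha (nL a hv)
  · obtain ⟨b, rfl⟩ := exists_pair (cB p hp) hv
    have hb := nfB a b hp ha
    have s1 := hB b a (by rwa [perm_ba])
    have db := dec_not_mem (f := f) hb
    obtain ⟨B', rfl⟩ := Multiset.exists_cons_of_mem hp
    simp only [Multiset.card_cons] at *
    refine ⟨{a}, ((b :: A : List V) : Multiset V) + L + B'.join + C.join, ?_, ?_, ?_,
      b :: A, L, B', C, rfl, fun p hp => cB p (by simp [hp]), cC, ⟨?_, ?_⟩,
      ordGE_keep hL nL (by simp only [List.length_append, List.length_cons, List.length_nil]; omega), fun a b h => iB a b (Multiset.mem_cons_of_mem h), iC, ?_, ?_⟩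
    · rw [hcov, Multiset.join_cons, ← Multiset.cons_coe, ← Multiset.singleton_add]
      have : ({a, b} : Multiset V) = {a} + {b} := rfl
      rw [this]; abel
    · simp [ha]
    · simp
    · rw [db]; omega
    · exact ordGE_keep hA nA (by omega)
    · simp only [List.length_cons]
      exact transB (Multiset.le_cons_self _ _) hB (fun a b h _ => by have := hB a b h; omega)
        (Or.inr ⟨by omega, nfB⟩) (by omega)
    · simp only [List.length_cons]
      exact transC le_rfl hC (fun a b c h _ => by have := hC a b c h; omega)
        (fun a b c h ha hb => absurd hb (nd a b c h ha))
        (Or.inr (Or.inr ⟨by omega, nd⟩)) (by omega) (by omega)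
  · obtain ⟨b, c, rfl⟩ := exists_triple (cC p hp) hv
    exact absurd ⟨a, b, c, hp, ha⟩ c10

omit [Fintype V] in
theorem aux_of_inv {G : SimpleGraph V} (n : ℕ) : ∀ (S : Finset V) (f : V → ℕ)
    (A L : List V) (B C : Multiset (Multiset V)), PInv G S.val f A L B C → ∑ v ∈ S, f v < n →
    OnlineChoosableAux G n S f := by
  induction n with
  | zero => intro S f A L B C _ h; omega
  | succ n ih =>
    intro S f A L B C h hn
    have hpos := h.pos
    by_cases he : ∃ u ∈ S, ∃ v ∈ S, G.Adj u v
    · refine Or.inr ⟨he, ?_⟩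
      intro U hUS hUne
      obtain ⟨x, hx⟩ := hUne
      obtain ⟨m, M', hM, hmU, hmi, A', L', B', C', h'⟩ :=
        reply_of_inv h U ⟨x, hUS hx, hx⟩
      have hnd : m.Nodup := by
        have := S.nodup
        rw [hM] at this
        exact (Multiset.nodup_add.1 this).1
      refine ⟨⟨m, hnd⟩, fun y hy => hmU y hy, fun u hu v hv => hmi u hu v hv, ?_⟩
      have hval : (S \ (⟨m, hnd⟩ : Finset V)).val = M' := by
        rw [Finset.sdiff_val, hM]
        exact add_tsub_cancel_left m M'
      refine ih _ (dec f U) A' L' B' C' (by rw [hval]; exact h') ?_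
      calc ∑ v ∈ S \ (⟨m, hnd⟩ : Finset V), dec f U v ≤ ∑ v ∈ S, dec f U v :=
            Finset.sum_le_sum_of_subset Finset.sdiff_subset
        _ < ∑ v ∈ S, f v := by
            refine Finset.sum_lt_sum (fun v _ => by unfold dec; omega) ⟨x, hUS hx, ?_⟩
            have := hpos x (hUS hx)
            rw [dec_mem hx]; omega
        _ ≤ n := by omega
    · push Not at he
      exact Or.inl ⟨he, fun v hv => hpos v hv⟩

theorem exists_parts {k : ℕ} (col : V → Fin k)
    (h3 : ∀ i, (Finset.univ.filter (fun v => col v = i)).card ≤ 3) (T : Finset (Fin k)) :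
    ∃ (A : List V) (B C : Multiset (Multiset V)),
      (Finset.univ.filter (fun v => col v ∈ T)).val = (A : Multiset V) + B.join + C.join ∧
      A.length + B.card + C.card ≤ T.card ∧
      (∀ p ∈ B, p.card = 2 ∧ ∀ x ∈ p, ∀ y ∈ p, col x = col y) ∧
      (∀ p ∈ C, p.card = 3 ∧ ∀ x ∈ p, ∀ y ∈ p, col x = col y) := by
  induction T using Finset.induction_on with
  | empty => exact ⟨[], 0, 0, by simp, by simp, by simp, by simp⟩
  | insert i T hi ih =>
    obtain ⟨A, B, C, hc, hl, hB, hC⟩ := ih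
    have hsplit : (Finset.univ.filter (fun v => col v ∈ insert i T)).val =
        (Finset.univ.filter (fun v => col v = i)).val +
        (Finset.univ.filter (fun v => col v ∈ T)).val := by
      have hd : Disjoint (Finset.univ.filter (fun v => col v = i))
          (Finset.univ.filter (fun v => col v ∈ T)) := by
        rw [Finset.disjoint_filter]
        rintro x _ rfl
        exact hi
      rw [← Finset.disjUnion_val _ _ hd]
      congr 1
      ext x
      simp
    rw [Finset.card_insert_of_notMem hi]
    have hmono : ∀ x ∈ (Finset.univ.filter (fun v => col v = i)).val,
        ∀ y ∈ (Finset.univ.filter (fun v => col v = i)).val, col x = col y := by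
      intro x hx y hy
      have hx : x ∈ Finset.univ.filter (fun v => col v = i) := hx
      have hy : y ∈ Finset.univ.filter (fun v => col v = i) := hy
      simp only [Finset.mem_filter, Finset.mem_univ, true_and] at hx hy
      rw [hx, hy]
    have hle := h3 i
    rw [← Finset.card_val] at hle
    rw [hsplit, hc]
    generalize (Finset.univ.filter (fun v => col v = i)).val = p at hmono hle
    obtain h0 | h0 | h0 | h0 : p.card = 0 ∨ p.card = 1 ∨ p.card = 2 ∨ p.card = 3 := by omega
    · rw [Multiset.card_eq_zero] at h0
      subst h0
      exact ⟨A, B, C, by simp, by omega, hB, hC⟩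
    · obtain ⟨a, rfl⟩ := Multiset.card_eq_one.1 h0
      refine ⟨a :: A, B, C, ?_, by simp only [List.length_cons]; omega, hB, hC⟩
      rw [← Multiset.cons_coe, ← Multiset.singleton_add]; abel
    · refine ⟨A, p ::ₘ B, C, ?_, by rw [Multiset.card_cons]; omega, ?_, hC⟩
      · rw [Multiset.join_cons]; abel
      · intro q hq
        rcases Multiset.mem_cons.1 hq with rfl | hq
        · exact ⟨h0, hmono⟩
        · exact hB q hq
    · refine ⟨A, B, p ::ₘ C, ?_, by rw [Multiset.card_cons]; omega, hB, ?_⟩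
      · rw [Multiset.join_cons]; abel
      · intro q hq
        rcases Multiset.mem_cons.1 hq with rfl | hq
        · exact ⟨h0, hmono⟩
        · exact hC q hq

omit [Fintype V] [DecidableEq V] in
theorem card_join_const {B : Multiset (Multiset V)} {n : ℕ} (h : ∀ p ∈ B, p.card = n) :
    B.join.card = n * B.card := by
  induction B using Multiset.induction_on with
  | empty => simp
  | cons p B ih =>
    rw [Multiset.join_cons, Multiset.card_add, h p (by simp), Multiset.card_cons,
      ih (fun q hq => h q (by simp [hq]))]
    ring

theorem choosable_of_colorable (G : SimpleGraph V)
    (hInd : ∀ s : Finset V, (∀ u ∈ s, ∀ v ∈ s, ¬ G.Adj u v) → s.card ≤ 3) {k : ℕ}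
    (hk : G.Colorable k) (hcard : Fintype.card V ≤ 2 * k) :
    OnlineChoosable G Finset.univ (fun _ => k) := by
  obtain ⟨col⟩ := hk
  have hcol : ∀ u v, col u = col v → ¬ G.Adj u v := fun u v h ha => col.valid ha h
  obtain ⟨A, B, C, hc, hl, hB, hC⟩ := exists_parts (fun v => col v) (fun i => hInd _ (by
    intro u hu v hv
    simp only [Finset.mem_filter, Finset.mem_univ, true_and] at hu hv
    exact hcol u v (hu.trans hv.symm))) Finset.univ
  simp only [Finset.mem_univ, Finset.filter_true, Finset.card_univ, Fintype.card_fin] at hc hl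
  have hN : Fintype.card V = A.length + 2 * B.card + 3 * C.card := by
    rw [← Finset.card_univ, ← Finset.card_val, hc, Multiset.card_add, Multiset.card_add,
      card_join_const (fun p hp => (hB p hp).1), card_join_const (fun p hp => (hC p hp).1),
      Multiset.coe_card]
  refine ⟨_, aux_of_inv _ Finset.univ (fun _ => k) A [] B C ?_ (Nat.lt_succ_self _)⟩
  refine ⟨by rw [hc]; simp, fun p hp => (hB p hp).1, fun p hp => (hC p hp).1,
    ordGE_const (by omega), trivial, ?_, ?_, ?_, ?_⟩
  · intro a b h
    exact hcol a b ((hB _ h).2 a (by simp) b (by simp))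
  · intro a b c h
    exact hcol a b ((hC _ h).2 a (by simp) b (by simp))
  · intro a b h
    simp only [List.length_nil]
    omega
  · intro a b c h
    simp only [List.length_nil]
    omega

omit [Fintype V] in
theorem coloring_of_aux {G : SimpleGraph V} (n : ℕ) : ∀ (S : Finset V) (f : V → ℕ) (k : ℕ),
    (∀ v ∈ S, f v = k) → OnlineChoosableAux G n S f →
    ∃ col : V → ℕ, (∀ v ∈ S, col v < k) ∧ ∀ u ∈ S, ∀ v ∈ S, G.Adj u v → col u ≠ col v := by
  induction n with
  | zero => intro S f k _ h; exact h.elim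
  | succ n ih =>
    intro S f k hf h
    rcases h with ⟨h1, h2⟩ | ⟨⟨u, hu, v, hv, huv⟩, h⟩
    · refine ⟨fun _ => 0, fun v hv => ?_, fun u hu v hv huv => absurd huv (h1 u hu v hv)⟩
      have := h2 v hv
      have := hf v hv
      show 0 < k
      omega
    · obtain ⟨I, hIS, hI, hn⟩ := h S (Finset.Subset.refl _) ⟨u, hu⟩
      obtain ⟨col, hlt, hp⟩ := ih (S \ I) _ (k - 1) (fun x hx => by
        have hx := (Finset.mem_sdiff.1 hx).1
        simp [hx, hf x hx]) hn
      have hkpos : 0 < k := by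
        by_contra hk
        have : ∀ x ∈ S, x ∈ I := by
          intro x hx
          by_contra hxI
          have := hlt x (Finset.mem_sdiff.2 ⟨hx, hxI⟩)
          omega
        exact hI u (this u hu) v (this v hv) huv
      refine ⟨fun x => if x ∈ I then k - 1 else col x, ?_, ?_⟩
      · intro x hx
        by_cases hxI : x ∈ I
        · simp only [hxI, if_true]; omega
        · have := hlt x (Finset.mem_sdiff.2 ⟨hx, hxI⟩)
          simp only [hxI, if_false]; omega
      · intro x hx y hy hxy
        by_cases hxI : x ∈ I <;> by_cases hyI : y ∈ I
        · exact absurd hxy (hI x hxI y hyI)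
        · have := hlt y (Finset.mem_sdiff.2 ⟨hy, hyI⟩)
          simp only [hxI, hyI, if_true, if_false]; omega
        · have := hlt x (Finset.mem_sdiff.2 ⟨hx, hxI⟩)
          simp only [hxI, hyI, if_true, if_false]; omega
        · simp only [hxI, hyI, if_false]
          exact hp x (Finset.mem_sdiff.2 ⟨hx, hxI⟩) y (Finset.mem_sdiff.2 ⟨hy, hyI⟩) hxy

theorem colorable_of_choosable {G : SimpleGraph V} {k : ℕ}
    (h : OnlineChoosable G Finset.univ (fun _ => k)) : G.Colorable k := by
  obtain ⟨n, h⟩ := h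
  obtain ⟨col, hlt, hp⟩ := coloring_of_aux n Finset.univ _ k (fun _ _ => rfl) h
  refine ⟨SimpleGraph.Coloring.mk (fun v => (⟨col v, hlt v (Finset.mem_univ v)⟩ : Fin k)) ?_⟩
  intro u v huv he
  exact hp u (Finset.mem_univ u) v (Finset.mem_univ v) huv (by simpa using he)

/-- On-line Ohba for independence number at most 3: if every independent set of `G` has
size at most 3 and `|V(G)| ≤ 2χ(G)`, then the on-line choice number of `G` equals its
chromatic number. -/
theorem online_ohba_of_independence_le_three (G : SimpleGraph V)
    (hInd : ∀ s : Finset V, (∀ u ∈ s, ∀ v ∈ s, ¬ G.Adj u v) → s.card ≤ 3)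
    (hcard : Fintype.card V ≤ 2 * chromNum G) :
    chromNum G = onlineChoiceNumber G := by
  have hne : {n | G.Colorable n}.Nonempty := ⟨_, G.colorable_of_fintype⟩
  have hcol : G.Colorable (chromNum G) := Nat.sInf_mem hne
  have hch : OnlineChoosable G Finset.univ (fun _ => chromNum G) :=
    choosable_of_colorable G hInd hcol hcard
  apply le_antisymm
  · have hmem : onlineChoiceNumber G ∈ {k | OnlineChoosable G Finset.univ (fun _ => k)} :=
      Nat.sInf_mem ⟨_, hch⟩
    exact Nat.sInf_le (colorable_of_choosable hmem)
  · exact Nat.sInf_le hch
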